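/- If the star expansion G_s of a hypergraph G_H is connected and has at least one edge (i.e., at least one incident vertex–hyperedge pair exists), then the line expansion G_l of G_H is connected; thus line expansion preserves the connectivity of the hypergraph. -/

import Mathlib

/-- The star expansion of a hypergraph `(V, E, h)`: the bipartite simple graph on `V ⊕ E`
where `v : V` and `e : E` are adjacent iff `h v e`. -/
def starExpansion {V E : Type*} (h : V → E → Prop) : SimpleGraph (V ⊕ E) where
  Adj x y :=
    match x, y with
    | Sum.inl v, Sum.inr e => h v e
    | Sum.inr e, Sum.inl v => h v e
    | _, _ => False
  symm := by
    refine ⟨?_⟩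
    rintro (v | e) (v' | e') hadj <;> simp_all
  loopless := by
    refine ⟨?_⟩
    rintro (v | e) hadj <;> simp_all

/-- The line expansion of a hypergraph `(V, E, h)`: the simple graph whose vertices are the
incident vertex–hyperedge pairs, two distinct pairs being adjacent iff they share the vertex
or the hyperedge. -/
def lineExpansion {V E : Type*} (h : V → E → Prop) :
    SimpleGraph {p : V × E // h p.1 p.2} where
  Adj p q := p ≠ q ∧ (p.1.1 = q.1.1 ∨ p.1.2 = q.1.2)
  symm := by
    refine ⟨?_⟩
    rintro p q ⟨hne, hor⟩
    exact ⟨hne.symm, hor.imp Eq.symm Eq.symm⟩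
  loopless := by
    refine ⟨?_⟩
    rintro p ⟨hne, -⟩
    exact hne rfl

theorem lineExp_reach_share {V E : Type*} (h : V → E → Prop) (p q : {p : V × E // h p.1 p.2})
    (hs : p.1.1 = q.1.1 ∨ p.1.2 = q.1.2) : (lineExpansion h).Reachable p q := by
  by_cases hpq : p = q
  · subst hpq; exact SimpleGraph.Reachable.refl _
  · exact SimpleGraph.Adj.reachable (show (lineExpansion h).Adj p q from ⟨hpq, hs⟩)

theorem lineExp_reach_walk {V E : Type*} (h : V → E → Prop) (x y : V ⊕ E)
    (w : (starExpansion h).Walk x y) (q : {p : V × E // h p.1 p.2})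
    (hq : Sum.inl q.1.1 = y ∨ Sum.inr q.1.2 = y) :
    ∀ p : {p : V × E // h p.1 p.2}, (Sum.inl p.1.1 = x ∨ Sum.inr p.1.2 = x) →
      (lineExpansion h).Reachable p q := by
  induction w with
  | nil =>
    intro p hp
    apply lineExp_reach_share
    rcases hp with rfl | rfl <;> rcases hq with hq | hq <;> simp_all
  | @cons a b c hadj w ih =>
    intro p hp
    rcases a with v | e <;> rcases b with v' | e'
    · exact hadj.elim
    · exact (lineExp_reach_share h p ⟨(v, e'), hadj⟩ (by left; simpa using hp)).trans
        (ih hq _ (Or.inr rfl))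
    · exact (lineExp_reach_share h p ⟨(v', e), hadj⟩ (by right; simpa using hp)).trans
        (ih hq _ (Or.inl rfl))
    · exact hadj.elim

/-- **Theorem.** If the star expansion of a hypergraph is connected and there exists at least one
incident vertex–hyperedge pair (i.e. the star expansion has at least one edge), then the line
expansion of the hypergraph is connected: line expansion preserves connectivity. -/
theorem lineExpansion_connected
    {V E : Type*} [Fintype V] [Fintype E] [DecidableEq V] [DecidableEq E]
    (h : V → E → Prop) [∀ v e, Decidable (h v e)]
    (hconn : (starExpansion h).Connected) (hne : ∃ v e, h v e) :
    (lineExpansion h).Connected := by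
  obtain ⟨v, e, hve⟩ := hne
  haveI : Nonempty {p : V × E // h p.1 p.2} := ⟨⟨(v, e), hve⟩⟩
  refine SimpleGraph.Connected.mk fun p q => ?_
  obtain ⟨w⟩ := hconn.preconnected (Sum.inl p.1.1) (Sum.inl q.1.1)
  exact lineExp_reach_walk h _ _ w q (Or.inl rfl) p (Or.inl rfl)
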